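/- arXiv:0910.1962 — 2 statements merged into one kernel-verified Lean document; each statement's English description precedes it below -/
import Mathlib

section
/- Let p be a prime and let 0 ≤ u ≤ v and 0 ≤ ℓ ≤ m be integers. Then the number of group homomorphisms f : ℤ/p^vℤ → ℤ/p^mℤ with f(p^{v−u}(ℤ/p^vℤ)) ⊆ p^{m−ℓ}(ℤ/p^mℤ) equals p^{min{m, v − max{0, u−ℓ}}}. -/
/-!
A homomorphism `f : ℤ/n → A` is the same as an element `x = f 1` of `A` with `n • x = 0`. When
`A = ℤ/tk`, the subgroup generated by `t` is the `k`-torsion of `A`, so `f` sends `s` into it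
exactly when `sk • x = 0`. Both conditions together say that `x` is killed by `gcd(n, sk)`,
and the `d`-torsion of `ℤ/m` has `gcd(m, d)` elements. For pickets all these numbers are powers of
`p`, and the gcds become minima of exponents.
-/

section ZModHom

open AddSubgroup

/-- The homomorphisms from `ℤ/n` to `A` as the elements of `A` killed by `n`; `f` corresponds to
`f 1`. -/
def zmodAddMonoidHomEquiv (n : ℕ) (A : Type*) [AddGroup A] :
    (ZMod n →+ A) ≃ {x : A // n • x = 0} where
  toFun f := ⟨f 1, by rw [← map_nsmul, nsmul_one, ZMod.natCast_self, map_zero]⟩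
  invFun x := ZMod.lift n ⟨zmultiplesHom A x, by simpa using x.2⟩
  left_inv f := by
    ext a
    obtain ⟨z, rfl⟩ := ZMod.intCast_surjective a
    rw [ZMod.lift_coe, zmultiplesHom_apply, ← map_zsmul, zsmul_one]
  right_inv x := Subtype.ext <| by
    simpa using ZMod.lift_coe n ⟨zmultiplesHom A x.1, by simpa using x.2⟩ 1

/-- Under evaluation at `1`, the homomorphisms `f` from `ℤ/n` with `f 1` killed by `k` are the
elements killed by `gcd(n, k)`. -/
def zmodAddMonoidHomTorsionEquiv (n k : ℕ) (A : Type*) [AddGroup A] :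
    {f : ZMod n →+ A // k • f 1 = 0} ≃ {x : A // n.gcd k • x = 0} :=
  ((zmodAddMonoidHomEquiv n A).subtypeEquiv fun _ => Iff.rfl).trans <|
    (Equiv.subtypeSubtypeEquivSubtypeInter (n • · = 0) (k • · = 0)).trans <|
      Equiv.subtypeEquivRight fun _ => gcd_nsmul_eq_zero.symm

theorem card_zmod_nsmul_eq_zero (m d : ℕ) [NeZero m] :
    Nat.card {x : ZMod m // d • x = 0} = m.gcd d :=
  (IsAddCyclic.card_nsmulAddMonoidHom_ker (ZMod m) d).trans (by rw [Nat.card_zmod])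

theorem zmod_mem_zmultiples_iff_nsmul_eq_zero {m t k : ℕ} (hm : t * k = m) (hk : k ≠ 0)
    (y : ZMod m) : y ∈ zmultiples (t : ZMod m) ↔ k • y = 0 := by
  subst hm
  constructor
  · rintro ⟨j, rfl⟩
    rw [smul_comm, nsmul_eq_mul, ← Nat.cast_mul, mul_comm k, ZMod.natCast_self, smul_zero]
  · intro hy
    obtain ⟨z, rfl⟩ := ZMod.intCast_surjective y
    have t_dvd_z : (t : ℤ) ∣ z := by
      rwa [nsmul_eq_mul, ← Int.cast_natCast, ← Int.cast_mul, ZMod.intCast_zmod_eq_zero_iff_dvd,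
        Nat.cast_mul, mul_comm (k : ℤ), mul_dvd_mul_iff_right (Nat.cast_ne_zero.2 hk)] at hy
    obtain ⟨j, rfl⟩ := t_dvd_z
    exact ⟨j, by simp [mul_comm]⟩

theorem forall_mem_zmultiples_map_mem_iff {G H : Type*} [AddGroup G] [AddGroup H] (f : G →+ H)
    (g : G) (K : AddSubgroup H) : (∀ a ∈ zmultiples g, f a ∈ K) ↔ f g ∈ K :=
  zmultiples_le (H := K.comap f)

theorem card_zmod_addMonoidHom_map_zmultiples (n s : ℕ) {m t k : ℕ} [NeZero m] (hm : t * k = m) :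
    Nat.card {f : ZMod n →+ ZMod m //
        ∀ a ∈ zmultiples (s : ZMod n), f a ∈ zmultiples (t : ZMod m)} =
      m.gcd (n.gcd (s * k)) := by
  have hk : k ≠ 0 := right_ne_zero_of_mul (hm ▸ NeZero.ne m)
  have map_mem_iff (f : ZMod n →+ ZMod m) :
      (∀ a ∈ zmultiples (s : ZMod n), f a ∈ zmultiples (t : ZMod m)) ↔ (s * k) • f 1 = 0 := by
    rw [forall_mem_zmultiples_map_mem_iff, zmod_mem_zmultiples_iff_nsmul_eq_zero hm hk,
      ← nsmul_one s, map_nsmul, mul_nsmul]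
  rw [← card_zmod_nsmul_eq_zero]
  exact Nat.card_congr <|
    (Equiv.subtypeEquivRight map_mem_iff).trans (zmodAddMonoidHomTorsionEquiv n (s * k) _)

end ZModHom

theorem gcd_pow_pow_eq_pow_min (p a b : ℕ) : (p ^ a).gcd (p ^ b) = p ^ min a b := by
  rcases le_total a b with h | h
  · rw [min_eq_left h, Nat.gcd_eq_left (pow_dvd_pow p h)]
  · rw [min_eq_right h, Nat.gcd_eq_right (pow_dvd_pow p h)]

theorem stmt_5_general (p : ℕ) (hp : p ≠ 0) (u v ℓ m : ℕ) (huv : u ≤ v) (hlm : ℓ ≤ m) :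
    Nat.card {f : ZMod (p ^ v) →+ ZMod (p ^ m) //
        ∀ a ∈ AddSubgroup.zmultiples ((p : ZMod (p ^ v)) ^ (v - u)),
          f a ∈ AddSubgroup.zmultiples ((p : ZMod (p ^ m)) ^ (m - ℓ))} =
      p ^ min m (v - max 0 (u - ℓ)) := by
  have : NeZero p := ⟨hp⟩
  have exponent_eq : min m (min v (v - u + ℓ)) = min m (v - max 0 (u - ℓ)) := by omega
  simpa only [Nat.cast_pow, ← pow_add, gcd_pow_pow_eq_pow_min, exponent_eq] using
    card_zmod_addMonoidHom_map_zmultiples (p ^ v) (p ^ (v - u)) (pow_sub_mul_pow p hlm)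

/-- The number of morphisms of pairs from the picket `P_u^v` to the picket `P_ℓ^m`, i.e.
homomorphisms `f : ℤ/p^v → ℤ/p^m` with `f(p^{v-u}(ℤ/p^v)) ⊆ p^{m-ℓ}(ℤ/p^m)`, equals
`p^{min{m, v - max{0, u-ℓ}}}`. -/
theorem stmt_5 (p : ℕ) (hp : p.Prime) (u v ℓ m : ℕ) (huv : u ≤ v) (hlm : ℓ ≤ m) :
    Nat.card {f : ZMod (p ^ v) →+ ZMod (p ^ m) //
        ∀ a ∈ AddSubgroup.zmultiples ((p : ZMod (p ^ v)) ^ (v - u)),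
          f a ∈ AddSubgroup.zmultiples ((p : ZMod (p ^ m)) ^ (m - ℓ))} =
      p ^ min m (v - max 0 (u - ℓ)) :=
  stmt_5_general p hp.ne_zero u v ℓ m huv hlm
end

section
/- Let p be a prime and let 1 ≤ w ≤ v−2 and 0 ≤ ℓ ≤ m be integers. Set B = ℤ/p^vℤ ⊕ ℤ/p^wℤ and let A be the cyclic subgroup of B generated by (p^{v−2}, p^{w−1}). Then the number of group homomorphisms f : B → ℤ/p^mℤ with f(A) ⊆ p^{m−ℓ}(ℤ/p^mℤ) equals: p^{min{v−1,m} + min{w−1,m}} if ℓ = 0; p^{min{v−1,m} + min{w,m}} if ℓ = 1; and p^{min{v,m} + min{w,m}} if ℓ ≥ 2. -/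
/-!
A homomorphism `f : ℤ/p^v ⊕ ℤ/p^w → A` is a pair `x = f (1, 0)`, `y = f (0, 1)` with
`p^v x = 0 = p^w y`. In `A = ℤ/p^m` the subgroup generated by `p^(m-ℓ)` is the `p^ℓ`-torsion, so `f`
respects the subgroups iff `p^ℓ (p^(v-2) x + p^(w-1) y) = 0`. For `ℓ ≥ 2` this is automatic. For
`ℓ = 1` the second summand vanishes and the condition becomes `p^(v-1) x = 0`. For `ℓ = 0` it reads
`p^(w-1) (y + p^(v-1-w) x) = 0`, and the shear `(x, y) ↦ (x, y + p^(v-1-w) x)` decouples the two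
coordinates into a `p^(v-1)`-torsion and a `p^(w-1)`-torsion element. It remains to count torsion in
the cyclic group `ℤ/p^m`.
-/

open AddSubgroup

/-- Morphisms of pairs `(S ⊆ B) → (T ⊆ C)`: the homomorphisms `B → C` mapping `S` into `T`. -/
abbrev PairHom {B C : Type*} [AddGroup B] [AddGroup C] (S : AddSubgroup B) (T : AddSubgroup C) :
    Type _ :=
  {f : B →+ C // ∀ a ∈ S, f a ∈ T}

/-- The subgroup in the picket `P_ℓ^m`; the ambient group is recorded in the type. -/
abbrev picketSubgroup (p ℓ m : ℕ) : AddSubgroup (ZMod (p ^ m)) :=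
  zmultiples ((p : ZMod (p ^ m)) ^ (m - ℓ))

/-- The subgroup in the bipicket `T_2^{v,w}`; the ambient group is recorded in the type. The
exponents are truncated differences, so this is the intended subgroup only for `2 ≤ v`, `1 ≤ w`. -/
abbrev bipicketSubgroup (p v w : ℕ) : AddSubgroup (ZMod (p ^ v) × ZMod (p ^ w)) :=
  zmultiples ((p : ZMod (p ^ v)) ^ (v - 2), (p : ZMod (p ^ w)) ^ (w - 1))

theorem card_addSubgroup_prod {B C : Type*} [AddGroup B] [AddGroup C] (S : AddSubgroup B)
    (T : AddSubgroup C) : Nat.card (S.prod T) = Nat.card S * Nat.card T := by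
  rw [Nat.card_congr (S.prodEquiv T).toEquiv, Nat.card_prod]

section Cyclic

theorem zmultiples_intCast_eq_torsionBy {n : ℕ} {a b : ℤ} (hb : b ≠ 0) (h : b * a = n) :
    zmultiples (a : ZMod n) = (ZMod n)[b] := by
  ext z
  obtain ⟨z, rfl⟩ := ZMod.intCast_surjective z
  have mem_torsionBy_iff : (z : ZMod n) ∈ (ZMod n)[b] ↔ a ∣ z := by
    rw [Submodule.mem_toAddSubgroup, Submodule.mem_torsionBy_iff, zsmul_eq_mul, ← Int.cast_mul,
      ZMod.intCast_zmod_eq_zero_iff_dvd, ← h, mul_dvd_mul_iff_left hb]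
  rw [mem_torsionBy_iff, mem_zmultiples_iff]
  constructor
  · rintro ⟨k, hk⟩
    rw [zsmul_eq_mul, ← Int.cast_mul, ZMod.intCast_eq_intCast_iff_dvd_sub, ← h] at hk
    exact (Int.dvd_iff_dvd_of_dvd_sub ((dvd_mul_left a b).trans hk)).2 (dvd_mul_left a k)
  · rintro ⟨k, rfl⟩
    exact ⟨k, by rw [zsmul_eq_mul, ← Int.cast_mul, mul_comm]⟩

theorem picketSubgroup_eq_torsionBy {p ℓ m : ℕ} (hp : p ≠ 0) (hlm : ℓ ≤ m) :
    picketSubgroup p ℓ m = (ZMod (p ^ m))[p ^ ℓ] := by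
  have hpow : (p : ℤ) ^ ℓ * (p : ℤ) ^ (m - ℓ) = (p ^ m : ℕ) := by
    rw [← pow_add, Nat.add_sub_cancel' hlm, Nat.cast_pow]
  simpa using zmultiples_intCast_eq_torsionBy (pow_ne_zero ℓ (Nat.cast_ne_zero.2 hp)) hpow

theorem card_torsionBy_zmod (n k : ℕ) [NeZero n] : Nat.card (ZMod n)[k] = n.gcd k := by
  have torsionBy_eq_ker : (ZMod n)[k] = (nsmulAddMonoidHom k : ZMod n →+ ZMod n).ker := by
    ext z
    exact torsionBy.nsmul_iff
  rw [torsionBy_eq_ker, IsAddCyclic.card_nsmulAddMonoidHom_ker, Nat.card_zmod]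

theorem nat_gcd_pow_pow (p m k : ℕ) : (p ^ m).gcd (p ^ k) = p ^ min m k := by
  rcases le_total m k with h | h
  · rw [min_eq_left h, Nat.gcd_eq_left (pow_dvd_pow p h)]
  · rw [min_eq_right h, Nat.gcd_eq_right (pow_dvd_pow p h)]

theorem card_torsionBy_zmod_pow {p : ℕ} (hp : p ≠ 0) (k m : ℕ) :
    Nat.card (ZMod (p ^ m))[p ^ k] = p ^ min k m := by
  have : NeZero p := ⟨hp⟩
  rw [← Nat.cast_pow, card_torsionBy_zmod, nat_gcd_pow_pow, min_comm]

end Cyclic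

variable {A : Type*} [AddCommGroup A]

section Hom

/-- Homomorphisms out of `ℤ/n` are the `n`-torsion elements of the target, by the image of `1`. -/
def torsionByEquivHom (A : Type*) [AddCommGroup A] (n : ℕ) : A[n] ≃ (ZMod n →+ A) :=
  ((zmultiplesHom A).subtypeEquiv fun _ => by simp).trans (ZMod.lift n)

theorem torsionByEquivHom_apply_intCast {n : ℕ} (x : A[n]) (a : ℤ) :
    torsionByEquivHom A n x a = a • (x : A) :=
  ZMod.lift_coe ..

/-- Homomorphisms out of `ℤ/n ⊕ ℤ/k` are pairs of an `n`-torsion and a `k`-torsion element of the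
target, the images of the two standard generators. -/
def prodTorsionByEquivHom (A : Type*) [AddCommGroup A] (n k : ℕ) :
    A[n].prod A[k] ≃ (ZMod n × ZMod k →+ A) :=
  (A[n].prodEquiv A[k]).toEquiv.trans <|
    ((torsionByEquivHom A n).prodCongr (torsionByEquivHom A k)).trans
      { toFun := fun f => f.1.coprod f.2
        invFun := fun f => (f.comp (.inl _ _), f.comp (.inr _ _))
        left_inv := fun f => by simp
        right_inv := fun f => f.coprod_unique }

theorem prodTorsionByEquivHom_apply_intCast {n k : ℕ} (z : A[n].prod A[k]) (a b : ℤ) :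
    prodTorsionByEquivHom A n k z (a, b) = a • z.1.1 + b • z.1.2 := by
  obtain ⟨⟨x, y⟩, hx, hy⟩ := z
  exact congr_arg₂ (· + ·) (torsionByEquivHom_apply_intCast ⟨x, hx⟩ a)
    (torsionByEquivHom_apply_intCast ⟨y, hy⟩ b)

theorem card_pairHom_zmultiples (n k : ℕ) (a b : ℤ) (T : AddSubgroup A) :
    Nat.card (PairHom (zmultiples ((a : ZMod n), (b : ZMod k))) T) =
      Nat.card {z : A × A // z ∈ A[n].prod A[k] ∧ a • z.1 + b • z.2 ∈ T} := by
  have maps_generator_iff (z : A[n].prod A[k]) : a • z.1.1 + b • z.1.2 ∈ T ↔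
      ∀ c ∈ zmultiples ((a : ZMod n), (b : ZMod k)), prodTorsionByEquivHom A n k z c ∈ T := by
    rw [← prodTorsionByEquivHom_apply_intCast]
    exact (zmultiples_le (H := T.comap (prodTorsionByEquivHom A n k z))).symm
  exact Nat.card_congr <|
    ((prodTorsionByEquivHom A n k).subtypeEquiv maps_generator_iff).symm.trans <|
      Equiv.subtypeSubtypeEquivSubtypeInter (· ∈ A[n].prod A[k]) (fun z => a • z.1 + b • z.2 ∈ T)

end Hom

section Bipicket

variable (p : ℕ) {v w : ℕ}

theorem card_pairHom_bipicketSubgroup (v w : ℕ) (T : AddSubgroup A) :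
    Nat.card (PairHom (bipicketSubgroup p v w) T) =
      Nat.card {z : A × A // z ∈ A[p ^ v].prod A[p ^ w] ∧
        (p : ℤ) ^ (v - 2) • z.1 + (p : ℤ) ^ (w - 1) • z.2 ∈ T} := by
  simpa using card_pairHom_zmultiples (p ^ v) (p ^ w) (p ^ (v - 2)) (p ^ (w - 1)) T

theorem mem_torsionBy_prod_and_eq_zero_iff_shear (q : ℤ) (hw : 1 ≤ w) (hwv : w < v) (x y : A) :
    ((x, y) ∈ A[q ^ v].prod A[q ^ w] ∧ q ^ (v - 2) • x + q ^ (w - 1) • y = 0) ↔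
      (x, y + q ^ (v - 1 - w) • x) ∈ A[q ^ (v - 1)].prod A[q ^ (w - 1)] := by
  obtain ⟨u, rfl⟩ := Nat.exists_eq_add_of_le' hw
  obtain ⟨d, rfl⟩ := Nat.exists_eq_add_of_lt hwv
  rw [show u + 1 + d + 1 - 2 = u + d by omega, show u + 1 + d + 1 - 1 - (u + 1) = d by omega]
  simp only [mem_prod, Submodule.mem_toAddSubgroup, Submodule.mem_torsionBy_iff,
    Nat.add_sub_cancel]
  constructor
  · rintro ⟨⟨-, hy⟩, h⟩
    exact ⟨by linear_combination (norm := module) q • h - hy,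
      by linear_combination (norm := module) h⟩
  · rintro ⟨hx, hxy⟩
    exact ⟨⟨by linear_combination (norm := module) q • hx,
      by linear_combination (norm := module) q • hxy - hx⟩,
      by linear_combination (norm := module) hxy⟩

theorem mem_torsionBy_prod_and_mem_torsionBy_iff (q : ℤ) (hw : 1 ≤ w) (hv : 2 ≤ v) (x y : A) :
    ((x, y) ∈ A[q ^ v].prod A[q ^ w] ∧ q ^ (v - 2) • x + q ^ (w - 1) • y ∈ A[q]) ↔
      (x, y) ∈ A[q ^ (v - 1)].prod A[q ^ w] := by
  obtain ⟨u, rfl⟩ := Nat.exists_eq_add_of_le' hw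
  obtain ⟨t, rfl⟩ := Nat.exists_eq_add_of_le' hv
  rw [show t + 2 - 1 = t + 1 by omega]
  simp only [mem_prod, Submodule.mem_toAddSubgroup, Submodule.mem_torsionBy_iff,
    Nat.add_sub_cancel]
  constructor
  · rintro ⟨⟨-, hy⟩, h⟩
    exact ⟨by linear_combination (norm := module) h - hy, hy⟩
  · rintro ⟨hx, hy⟩
    exact ⟨⟨by linear_combination (norm := module) q • hx, hy⟩,
      by linear_combination (norm := module) hx + hy⟩

theorem smul_add_smul_mem_torsionBy {ℓ : ℕ} (hℓ : 2 ≤ ℓ) (q : ℤ) (hw : 1 ≤ w) (hv : 2 ≤ v)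
    {x y : A} (hxy : (x, y) ∈ A[q ^ v].prod A[q ^ w]) :
    q ^ (v - 2) • x + q ^ (w - 1) • y ∈ A[q ^ ℓ] := by
  obtain ⟨u, rfl⟩ := Nat.exists_eq_add_of_le' hw
  obtain ⟨t, rfl⟩ := Nat.exists_eq_add_of_le' hv
  obtain ⟨k, rfl⟩ := Nat.exists_eq_add_of_le' hℓ
  simp only [mem_prod, Submodule.mem_toAddSubgroup, Submodule.mem_torsionBy_iff,
    Nat.add_sub_cancel] at hxy ⊢
  linear_combination (norm := module) q ^ k • hxy.1 + q ^ (k + 1) • hxy.2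

theorem card_pairHom_bipicketSubgroup_bot (hw : 1 ≤ w) (hwv : w < v) :
    Nat.card (PairHom (bipicketSubgroup p v w) (⊥ : AddSubgroup A)) =
      Nat.card A[p ^ (v - 1)] * Nat.card A[p ^ (w - 1)] := by
  rw [card_pairHom_bipicketSubgroup, ← card_addSubgroup_prod]
  let shear : A × A ≃ A × A :=
    (Equiv.refl A).prodShear fun x => Equiv.addRight ((p : ℤ) ^ (v - 1 - w) • x)
  exact Nat.card_congr <| shear.subtypeEquiv fun z =>
    mem_torsionBy_prod_and_eq_zero_iff_shear p hw hwv z.1 z.2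

theorem card_pairHom_bipicketSubgroup_torsionBy (hw : 1 ≤ w) (hv : 2 ≤ v) :
    Nat.card (PairHom (bipicketSubgroup p v w) A[p]) =
      Nat.card A[p ^ (v - 1)] * Nat.card A[p ^ w] := by
  rw [card_pairHom_bipicketSubgroup, ← card_addSubgroup_prod]
  exact Nat.card_congr <| Equiv.subtypeEquivRight fun z =>
    mem_torsionBy_prod_and_mem_torsionBy_iff p hw hv z.1 z.2

theorem card_pairHom_bipicketSubgroup_torsionBy_pow {ℓ : ℕ} (hℓ : 2 ≤ ℓ) (hw : 1 ≤ w)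
    (hv : 2 ≤ v) :
    Nat.card (PairHom (bipicketSubgroup p v w) A[p ^ ℓ]) =
      Nat.card A[p ^ v] * Nat.card A[p ^ w] := by
  rw [card_pairHom_bipicketSubgroup, ← card_addSubgroup_prod]
  exact Nat.card_congr <| Equiv.subtypeEquivRight fun z =>
    and_iff_left_of_imp fun hz => smul_add_smul_mem_torsionBy hℓ p hw hv hz

end Bipicket

theorem stmt_6_general {p v w ℓ m : ℕ} (hp : p ≠ 0) (hw : 1 ≤ w) (hwv : w < v) (hlm : ℓ ≤ m) :
    Nat.card (PairHom (bipicketSubgroup p v w) (picketSubgroup p ℓ m)) =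
      if ℓ = 0 then p ^ (min (v - 1) m + min (w - 1) m)
      else if ℓ = 1 then p ^ (min (v - 1) m + min w m)
      else p ^ (min v m + min w m) := by
  have hv : 2 ≤ v := by omega
  rw [picketSubgroup_eq_torsionBy hp hlm]
  simp only [pow_add, ← card_torsionBy_zmod_pow hp]
  split_ifs with h0 h1
  · have torsionBy_eq_bot : (ZMod (p ^ m))[p ^ ℓ] = ⊥ := by
      rw [h0, pow_zero, torsionBy, Submodule.torsionBy_one, Submodule.bot_toAddSubgroup]
    rw [torsionBy_eq_bot, card_pairHom_bipicketSubgroup_bot p hw hwv]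
  · rw [h1, pow_one, card_pairHom_bipicketSubgroup_torsionBy p hw hv]
  · exact card_pairHom_bipicketSubgroup_torsionBy_pow p (by omega) hw hv

/-- The number of morphisms of pairs from the bipicket `T_2^{v,w}` to the picket `P_ℓ^m`,
i.e. homomorphisms `f : ℤ/p^v ⊕ ℤ/p^w → ℤ/p^m` with `f(⟨(p^{v-2}, p^{w-1})⟩) ⊆
p^{m-ℓ}(ℤ/p^m)`. -/
theorem stmt_6 (p : ℕ) (hp : p.Prime) (v w ℓ m : ℕ) (h1 : 1 ≤ w) (h2 : w + 2 ≤ v)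
    (hlm : ℓ ≤ m) :
    Nat.card {f : (ZMod (p ^ v) × ZMod (p ^ w)) →+ ZMod (p ^ m) //
        ∀ a ∈ AddSubgroup.zmultiples ((p : ZMod (p ^ v)) ^ (v - 2), (p : ZMod (p ^ w)) ^ (w - 1)),
          f a ∈ AddSubgroup.zmultiples ((p : ZMod (p ^ m)) ^ (m - ℓ))} =
      if ℓ = 0 then p ^ (min (v - 1) m + min (w - 1) m)
      else if ℓ = 1 then p ^ (min (v - 1) m + min w m)
      else p ^ (min v m + min w m) :=
  stmt_6_general hp.ne_zero h1 (by omega) hlm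
end
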